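/- Let d be a positive integer, M ∈ ℂ^{d×d} a positive semi-definite Hermitian matrix of rank r ≤ d with eigenvalues λ₁ ≥ … ≥ λ_d, c ∈ ℝ, and a ∈ ℂ^d. Let A be the (d+1)×(d+1) Hermitian bordered matrix A = [[c, a*], [a, M]] and set η_r = |c − λ_r|. Then the (r+1)-st largest eigenvalue of A satisfies λ_{r+1}(A) ≥ min(c, λ_r) − 2‖a‖₂² / (η_r + √(η_r² + 4‖a‖₂²)). -/

import Mathlib

/-!
By the Courant–Fischer principle there is an `r`-dimensional space `V` on which the quadratic form
of `M` is at least `λ_r ‖y‖²`. For `x = (x₀, y)` with `y ∈ V`, Cauchy–Schwarz on the border gives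
`⟪x, A x⟫ ≥ c |x₀|² - 2 ‖a‖ |x₀| ‖y‖ + λ_r ‖y‖² ≥ t ‖x‖²`, where `t` is the smaller eigenvalue of
`[[c, ‖a‖], [‖a‖, λ_r]]`. These `x` form a space of dimension `r + 1`, so Courant–Fischer for `A`
yields `t ≤ λ_{r+1}(A)`, and `t` is the stated bound after rationalising.
-/

open scoped ComplexOrder
open scoped InnerProductSpace
open Module

section CourantFischer

variable {𝕜 E ι : Type*} [RCLike 𝕜] [NormedAddCommGroup E] [InnerProductSpace 𝕜 E]

lemma exists_mem_ne_zero_forall_inner_eq_zero [Fintype ι] (v : ι → E) {U : Submodule 𝕜 E}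
    (hU : Fintype.card ι < finrank 𝕜 U) : ∃ x ∈ U, x ≠ 0 ∧ ∀ i, ⟪v i, x⟫_𝕜 = 0 := by
  have : FiniteDimensional 𝕜 U := .of_finrank_pos (Nat.zero_lt_of_lt hU)
  let L : U →ₗ[𝕜] (ι → 𝕜) := LinearMap.pi fun i => innerₛₗ 𝕜 (v i) ∘ₗ U.subtype
  have hL : LinearMap.ker L ≠ ⊥ := LinearMap.ker_ne_bot_of_finrank_lt (by simpa using hU)
  obtain ⟨x, hx, hx0⟩ := Submodule.exists_mem_ne_zero_of_ne_bot hL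
  exact ⟨x, x.2, by simpa using hx0, fun i => congrFun (LinearMap.mem_ker.mp hx) i⟩

section Diagonal

variable [Fintype ι] {T : E →ₗ[𝕜] E} {b : OrthonormalBasis ι 𝕜 E} {μ : ι → ℝ}

lemma re_inner_apply_eq_sum_eigenvalue_mul (hT : ∀ i, T (b i) = (μ i : 𝕜) • b i) (x : E) :
    RCLike.re ⟪x, T x⟫_𝕜 = ∑ i, μ i * ‖⟪b i, x⟫_𝕜‖ ^ 2 := by
  have hTx : T x = ∑ i, ⟪b i, x⟫_𝕜 • (μ i : 𝕜) • b i := by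
    conv_lhs => rw [← b.sum_repr' x]
    simp only [map_sum, map_smul, hT]
  simp only [hTx, inner_sum, inner_smul_right, map_sum]
  refine Finset.sum_congr rfl fun i _ => ?_
  rw [mul_left_comm, RCLike.re_ofReal_mul, inner_mul_symm_re_eq_norm, norm_mul,
    norm_inner_symm x, sq]

lemma mul_norm_sq_le_re_inner_apply (hT : ∀ i, T (b i) = (μ i : 𝕜) • b i) {t : ℝ} {x : E}
    (h : ∀ i, t ≤ μ i ∨ ⟪b i, x⟫_𝕜 = 0) : t * ‖x‖ ^ 2 ≤ RCLike.re ⟪x, T x⟫_𝕜 := by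
  rw [re_inner_apply_eq_sum_eigenvalue_mul hT, ← b.sum_sq_norm_inner_right x, Finset.mul_sum]
  refine Finset.sum_le_sum fun i _ => ?_
  rcases h i with hi | hi
  · gcongr
  · simp [hi]

lemma re_inner_apply_le_mul_norm_sq (hT : ∀ i, T (b i) = (μ i : 𝕜) • b i) {t : ℝ} {x : E}
    (h : ∀ i, μ i ≤ t ∨ ⟪b i, x⟫_𝕜 = 0) : RCLike.re ⟪x, T x⟫_𝕜 ≤ t * ‖x‖ ^ 2 := by
  rw [re_inner_apply_eq_sum_eigenvalue_mul hT, ← b.sum_sq_norm_inner_right x, Finset.mul_sum]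
  refine Finset.sum_le_sum fun i _ => ?_
  rcases h i with hi | hi
  · gcongr
  · simp [hi]

end Diagonal

variable {m : ℕ} {T : E →ₗ[𝕜] E} {b : OrthonormalBasis (Fin m) 𝕜 E} {μ : Fin m → ℝ}

theorem exists_submodule_forall_eigenvalue_mul_norm_sq_le (hT : ∀ i, T (b i) = (μ i : 𝕜) • b i)
    (hμ : Antitone μ) (k : Fin m) :
    ∃ V : Submodule 𝕜 E, finrank 𝕜 V = k + 1 ∧
      ∀ y ∈ V, μ k * ‖y‖ ^ 2 ≤ RCLike.re ⟪y, T y⟫_𝕜 := by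
  let v : Finset.Iic k → E := fun i => b i
  have hv : LinearIndependent 𝕜 v :=
    b.orthonormal.linearIndependent.comp _ Subtype.val_injective
  refine ⟨Submodule.span 𝕜 (Set.range v), ?_, fun y hy => ?_⟩
  · rw [finrank_span_eq_card hv, Fintype.card_coe, Fin.card_Iic]
  refine mul_norm_sq_le_re_inner_apply hT fun i => (le_or_gt i k).imp (hμ ·) fun hi => ?_
  have hV : Submodule.span 𝕜 (Set.range v) ≤ (𝕜 ∙ b i)ᗮ := by
    rw [Submodule.span_le, Set.range_subset_iff]
    intro j
    rw [SetLike.mem_coe, Submodule.mem_orthogonal_singleton_iff_inner_right]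
    exact b.inner_eq_zero ((Finset.mem_Iic.mp j.2).trans_lt hi).ne'
  exact Submodule.mem_orthogonal_singleton_iff_inner_right.mp (hV hy)

theorem le_eigenvalue_of_forall_mem_mul_norm_sq_le (hT : ∀ i, T (b i) = (μ i : 𝕜) • b i)
    (hμ : Antitone μ) {k : Fin m} {U : Submodule 𝕜 E} (hk : k < finrank 𝕜 U) {t : ℝ}
    (hU : ∀ x ∈ U, t * ‖x‖ ^ 2 ≤ RCLike.re ⟪x, T x⟫_𝕜) : t ≤ μ k := by
  obtain ⟨x, hxU, hx0, hx⟩ := exists_mem_ne_zero_forall_inner_eq_zero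
    (fun i : Finset.Iio k => b i) (U := U) (by rwa [Fintype.card_coe, Fin.card_Iio])
  have hle : RCLike.re ⟪x, T x⟫_𝕜 ≤ μ k * ‖x‖ ^ 2 :=
    re_inner_apply_le_mul_norm_sq hT fun i =>
      (le_or_gt k i).imp (hμ ·) fun hi => hx ⟨i, Finset.mem_Iio.mpr hi⟩
  exact le_of_mul_le_mul_right ((hU x hxU).trans hle) (by positivity)

end CourantFischer

lemma exists_orthonormalBasis_toEuclideanLin_eq_smul {𝕜 n ι : Type*} [RCLike 𝕜] [Fintype n]
    [DecidableEq n] [Fintype ι] {B : Matrix n n 𝕜} {hB : B.IsHermitian} {μ : ι → ℝ}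
    (hμ : ∃ e : ι ≃ n, ∀ i, μ i = hB.eigenvalues (e i)) :
    ∃ b : OrthonormalBasis ι 𝕜 (EuclideanSpace 𝕜 n),
      ∀ i, Matrix.toEuclideanLin B (b i) = (μ i : 𝕜) • b i := by
  obtain ⟨e, he⟩ := hμ
  refine ⟨hB.eigenvectorBasis.reindex e.symm, fun i => PiLp.ext fun j => ?_⟩
  have h := congrFun (hB.mulVec_eigenvectorBasis (e i)) j
  simpa [Matrix.toLpLin_apply, he, RCLike.real_smul_eq_coe_mul] using h

/-- The smaller eigenvalue of the real symmetric matrix `[[c, s], [s, l]]`, as the smaller root of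
its characteristic polynomial. -/
noncomputable def smallerEigenvalue (c l s : ℝ) : ℝ :=
  (c + l - √((c - l) ^ 2 + 4 * s ^ 2)) / 2

lemma abs_sub_le_sqrt_sq_add (c l s : ℝ) : |c - l| ≤ √((c - l) ^ 2 + 4 * s ^ 2) :=
  Real.abs_le_sqrt (by linarith [sq_nonneg s])

lemma smallerEigenvalue_le_min (c l s : ℝ) : smallerEigenvalue c l s ≤ min c l := by
  have h := abs_le.mp (abs_sub_le_sqrt_sq_add c l s)
  unfold smallerEigenvalue
  exact le_min (by linarith) (by linarith)

lemma sub_smallerEigenvalue_mul_sub_smallerEigenvalue (c l s : ℝ) :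
    (c - smallerEigenvalue c l s) * (l - smallerEigenvalue c l s) = s ^ 2 := by
  have h : √((c - l) ^ 2 + 4 * s ^ 2) ^ 2 = (c - l) ^ 2 + 4 * s ^ 2 := Real.sq_sqrt (by positivity)
  unfold smallerEigenvalue
  linear_combination h / 4

lemma smallerEigenvalue_mul_le (c l s p q : ℝ) :
    smallerEigenvalue c l s * (p ^ 2 + q ^ 2) ≤ c * p ^ 2 - 2 * (s * p * q) + l * q ^ 2 := by
  obtain ⟨hc, hl⟩ := le_min_iff.mp (smallerEigenvalue_le_min c l s)
  have hs := sub_smallerEigenvalue_mul_sub_smallerEigenvalue c l s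
  generalize smallerEigenvalue c l s = t at *
  have h : 2 * (s * p * q) ≤ (c - t) * p ^ 2 + (l - t) * q ^ 2 :=
    two_mul_le_add_of_sq_le_mul (mul_nonneg (sub_nonneg.mpr hc) (sq_nonneg p))
      (mul_nonneg (sub_nonneg.mpr hl) (sq_nonneg q))
      (le_of_eq (by linear_combination -(p ^ 2 * q ^ 2) * hs))
  linarith

lemma smallerEigenvalue_eq_min_sub (c l s : ℝ) :
    smallerEigenvalue c l s =
      min c l - 2 * s ^ 2 / (|c - l| + √(|c - l| ^ 2 + 4 * s ^ 2)) := by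
  have hη : |c - l| ≤ √(|c - l| ^ 2 + 4 * s ^ 2) := by
    simpa only [sq_abs] using abs_sub_le_sqrt_sq_add c l s
  have hsq : √(|c - l| ^ 2 + 4 * s ^ 2) ^ 2 = |c - l| ^ 2 + 4 * s ^ 2 :=
    Real.sq_sqrt (by positivity)
  have hmin : min c l = (c + l - |c - l|) / 2 := by
    rw [eq_div_iff two_ne_zero, ← max_add_min c l, ← max_sub_min_eq_abs']
    ring
  rw [smallerEigenvalue, ← sq_abs (c - l), hmin]
  generalize √(|c - l| ^ 2 + 4 * s ^ 2) = R at *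
  have hfrac : 2 * s ^ 2 / (|c - l| + R) = (R - |c - l|) / 2 := by
    rcases (add_nonneg (abs_nonneg (c - l)) ((abs_nonneg _).trans hη)).eq_or_lt with h0 | hpos
    · -- Division by zero: here `|c - l| = R = 0`, so both sides vanish.
      rw [← h0, div_zero]
      linarith [abs_nonneg (c - l)]
    · rw [div_eq_iff hpos.ne']
      linear_combination -hsq / 2
  rw [hfrac]
  ring

section BorderedMatrix

variable {𝕜 n : Type*} [RCLike 𝕜]

/-- The bordered matrix `[[c, a*], [a, M]]`, the corner being indexed by `Unit`. -/
def borderedMatrix (c : ℝ) (a : EuclideanSpace 𝕜 n) (M : Matrix n n 𝕜) :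
    Matrix (Unit ⊕ n) (Unit ⊕ n) 𝕜 :=
  Matrix.fromBlocks (Matrix.of fun _ _ => (c : 𝕜)) (Matrix.of fun _ j => star (a j))
    (Matrix.of fun i _ => a i) M

lemma isHermitian_borderedMatrix (c : ℝ) (a : EuclideanSpace 𝕜 n) {M : Matrix n n 𝕜}
    (hM : M.IsHermitian) : (borderedMatrix c a M).IsHermitian :=
  .fromBlocks (by ext; simp) (by ext; simp) hM

/-- The vector `(x₀, y)` on which a bordered matrix acts, as a linear function of the pair. -/
def borderedVector : 𝕜 × EuclideanSpace 𝕜 n →ₗ[𝕜] EuclideanSpace 𝕜 (Unit ⊕ n) where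
  toFun x := WithLp.toLp 2 (Sum.elim (fun _ => x.1) x.2)
  map_add' _ _ := by ext (_ | _) <;> rfl
  map_smul' _ _ := by ext (_ | _) <;> rfl

lemma borderedVector_injective :
    Function.Injective (borderedVector : 𝕜 × EuclideanSpace 𝕜 n →ₗ[𝕜] _) := fun _ _ h =>
  Prod.ext congr($h (.inl ())) (PiLp.ext fun i => congr($h (.inr i)))

variable [Fintype n]

lemma inner_borderedVector (x y : 𝕜 × EuclideanSpace 𝕜 n) :
    ⟪borderedVector x, borderedVector y⟫_𝕜 = ⟪x.1, y.1⟫_𝕜 + ⟪x.2, y.2⟫_𝕜 := by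
  simp [PiLp.inner_apply, borderedVector]

lemma norm_sq_borderedVector (x : 𝕜 × EuclideanSpace 𝕜 n) :
    ‖borderedVector x‖ ^ 2 = ‖x.1‖ ^ 2 + ‖x.2‖ ^ 2 := by
  simp [EuclideanSpace.norm_sq_eq, borderedVector]

variable [DecidableEq n]

lemma toEuclideanLin_borderedMatrix (c : ℝ) (a : EuclideanSpace 𝕜 n) (M : Matrix n n 𝕜)
    (x : 𝕜 × EuclideanSpace 𝕜 n) :
    Matrix.toEuclideanLin (borderedMatrix c a M) (borderedVector x) =
      borderedVector (c * x.1 + ⟪a, x.2⟫_𝕜, x.1 • a + Matrix.toEuclideanLin M x.2) := by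
  ext (_ | i)
  · simp [borderedMatrix, borderedVector, Matrix.fromBlocks_mulVec, Matrix.mulVec, dotProduct,
      PiLp.inner_apply, mul_comm]
  · simp [borderedMatrix, borderedVector, Matrix.fromBlocks_mulVec, Matrix.mulVec, dotProduct,
      mul_comm]

lemma re_inner_borderedMatrix (c : ℝ) (a : EuclideanSpace 𝕜 n) (M : Matrix n n 𝕜) (x₀ : 𝕜)
    (y : EuclideanSpace 𝕜 n) :
    RCLike.re ⟪borderedVector (x₀, y),
        Matrix.toEuclideanLin (borderedMatrix c a M) (borderedVector (x₀, y))⟫_𝕜 =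
      c * ‖x₀‖ ^ 2 + 2 * RCLike.re ⟪x₀ • a, y⟫_𝕜 + RCLike.re ⟪y, Matrix.toEuclideanLin M y⟫_𝕜 := by
  have hcorner : RCLike.re ⟪x₀, (c : 𝕜) * x₀ + ⟪a, y⟫_𝕜⟫_𝕜 =
      c * ‖x₀‖ ^ 2 + RCLike.re ⟪x₀ • a, y⟫_𝕜 := by
    rw [inner_add_right, map_add, ← smul_eq_mul, inner_smul_right, RCLike.re_ofReal_mul,
      inner_self_eq_norm_sq, inner_smul_left, RCLike.inner_apply']
  rw [toEuclideanLin_borderedMatrix, inner_borderedVector, map_add, hcorner, inner_add_right,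
    map_add, inner_re_symm y]
  ring

lemma smallerEigenvalue_mul_norm_sq_le_re_inner {c l : ℝ} {a : EuclideanSpace 𝕜 n}
    {M : Matrix n n 𝕜} {x₀ : 𝕜} {y : EuclideanSpace 𝕜 n}
    (hy : l * ‖y‖ ^ 2 ≤ RCLike.re ⟪y, Matrix.toEuclideanLin M y⟫_𝕜) :
    smallerEigenvalue c l ‖a‖ * ‖borderedVector (x₀, y)‖ ^ 2 ≤
      RCLike.re ⟪borderedVector (x₀, y),
        Matrix.toEuclideanLin (borderedMatrix c a M) (borderedVector (x₀, y))⟫_𝕜 := by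
  have hcauchy : -(‖a‖ * ‖x₀‖ * ‖y‖) ≤ RCLike.re ⟪x₀ • a, y⟫_𝕜 := by
    have h : |RCLike.re ⟪x₀ • a, y⟫_𝕜| ≤ ‖x₀ • a‖ * ‖y‖ :=
      (RCLike.abs_re_le_norm _).trans (norm_inner_le_norm _ _)
    rw [norm_smul, mul_comm ‖x₀‖] at h
    exact neg_le_of_abs_le h
  calc smallerEigenvalue c l ‖a‖ * ‖borderedVector (x₀, y)‖ ^ 2
      = smallerEigenvalue c l ‖a‖ * (‖x₀‖ ^ 2 + ‖y‖ ^ 2) := by rw [norm_sq_borderedVector]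
    _ ≤ c * ‖x₀‖ ^ 2 - 2 * (‖a‖ * ‖x₀‖ * ‖y‖) + l * ‖y‖ ^ 2 := smallerEigenvalue_mul_le ..
    _ ≤ c * ‖x₀‖ ^ 2 + 2 * RCLike.re ⟪x₀ • a, y⟫_𝕜 +
          RCLike.re ⟪y, Matrix.toEuclideanLin M y⟫_𝕜 := by linarith
    _ = _ := (re_inner_borderedMatrix c a M x₀ y).symm

theorem bordered_smallest_nonzero_eigenvalue_lower_LiLi_general {d : ℕ} {M : Matrix n n 𝕜}
    (hM : M.IsHermitian) (c : ℝ) (a : EuclideanSpace 𝕜 n)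
    {μ : Fin d → ℝ} (hμa : Antitone μ) (hμ : ∃ e : Fin d ≃ n, ∀ i, μ i = hM.eigenvalues (e i))
    {ν : Fin (d + 1) → ℝ} (hνa : Antitone ν)
    (hν : ∃ e : Fin (d + 1) ≃ Unit ⊕ n,
      ∀ i, ν i = (isHermitian_borderedMatrix c a hM).eigenvalues (e i))
    (k : Fin d) :
    min c (μ k) - 2 * ‖a‖ ^ 2 / (|c - μ k| + √(|c - μ k| ^ 2 + 4 * ‖a‖ ^ 2)) ≤ ν k.succ := by
  obtain ⟨b, hb⟩ := exists_orthonormalBasis_toEuclideanLin_eq_smul hμ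
  obtain ⟨b', hb'⟩ := exists_orthonormalBasis_toEuclideanLin_eq_smul hν
  obtain ⟨V, hVrank, hV⟩ := exists_submodule_forall_eigenvalue_mul_norm_sq_le hb hμa k
  let g : 𝕜 × V →ₗ[𝕜] EuclideanSpace 𝕜 (Unit ⊕ n) :=
    borderedVector ∘ₗ LinearMap.id.prodMap V.subtype
  have hg : Function.Injective g :=
    borderedVector_injective.comp (Function.injective_id.prodMap V.injective_subtype)
  have hgrank : finrank 𝕜 (LinearMap.range g) = k + 2 := by
    rw [LinearMap.finrank_range_of_inj hg, finrank_prod, finrank_self, hVrank]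
    omega
  rw [← smallerEigenvalue_eq_min_sub]
  refine le_eigenvalue_of_forall_mem_mul_norm_sq_le hb' hνa (U := LinearMap.range g)
    (by simp [hgrank]) ?_
  rintro _ ⟨⟨x₀, y⟩, rfl⟩
  exact smallerEigenvalue_mul_norm_sq_le_re_inner (hV y y.2)

end BorderedMatrix

/-- **Lower bound on the smallest nonzero eigenvalue after bordering.**
`M ∈ ℂ^{d×d}` is PSD Hermitian of rank `r ≤ d`, with eigenvalues `μ 0 ≥ … ≥ μ (d-1)`
(`μ` is an antitone enumeration of the eigenvalues of `M`, so `μ (r-1) = λ_r`),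
and `ν` is an antitone enumeration of the eigenvalues of `A = [[c, a*], [a, M]]`
(so `ν r = λ_{r+1}(A)`). With `η_r = |c − λ_r|`:
`λ_{r+1}(A) ≥ min (c, λ_r) − 2‖a‖₂²/(η_r + √(η_r² + 4‖a‖₂²))`. -/
theorem bordered_smallest_nonzero_eigenvalue_lower_LiLi
    (d : ℕ) (hd : 0 < d)
    (M : Matrix (Fin d) (Fin d) ℂ) (hM : M.IsHermitian) (hpsd : M.PosSemidef)
    (r : ℕ) (hr1 : 1 ≤ r) (hrd : r ≤ d) (hrank : M.rank = r)
    (c : ℝ) (a : EuclideanSpace ℂ (Fin d))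
    (μ : Fin d → ℝ) (hμa : Antitone μ)
    (hμ : ∃ e : Equiv.Perm (Fin d), ∀ i, μ i = hM.eigenvalues (e i))
    (A : Matrix (Unit ⊕ Fin d) (Unit ⊕ Fin d) ℂ)
    (hA : A = Matrix.fromBlocks (Matrix.of fun _ _ => (c : ℂ))
        (Matrix.of fun _ j => star (a j)) (Matrix.of fun i _ => a i) M)
    (hAh : A.IsHermitian)
    (ν : Fin (d + 1) → ℝ) (hνa : Antitone ν)
    (hν : ∃ e : Fin (d + 1) ≃ (Unit ⊕ Fin d), ∀ i, ν i = hAh.eigenvalues (e i))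
    (lamr : ℝ) (hlamr : lamr = μ ⟨r - 1, by omega⟩)
    (etar : ℝ) (hetar : etar = |c - lamr|) :
    ν ⟨r, by omega⟩
      ≥ min c lamr - 2 * ‖a‖ ^ 2 / (etar + Real.sqrt (etar ^ 2 + 4 * ‖a‖ ^ 2)) := by
  subst hA hlamr hetar
  obtain ⟨k, rfl⟩ := Nat.exists_eq_add_of_le' hr1
  exact bordered_smallest_nonzero_eigenvalue_lower_LiLi_general hM c a hμa hμ hνa hν ⟨k, hrd⟩
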